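/- (Theorem 5) Let H := A ⊗ I_m + I_n ⊗ B with A an n×n and B an m×m Hermitian matrix, let ρ be an nm×nm density matrix, and let (P_k) be a family of pairwise-orthogonal n×n orthogonal projections summing to I_n such that ∑_k P_k ρ_a P_k = ρ_a, where ρ_a is the n×n matrix with entries (ρ_a)_{i i'} = ∑_j ρ_{(i,j),(i',j)}. Then, with Π(ρ) := ∑_k (P_k ⊗ I_m) ρ (P_k ⊗ I_m), one has ξ(ρ,H) − ξ(Π(ρ),H) = E_p(Π(ρ),H) − E_p(ρ,H) ≥ 0. -/

import Mathlib

open scoped BigOperators ComplexOrder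
open Matrix Kronecker

/-- Nondecreasing rearrangement of a finite real-valued family. -/
noncomputable def sortUp {ι : Type*} [Fintype ι] (f : ι → ℝ) : Fin (Fintype.card ι) → ℝ :=
  (f ∘ (Fintype.equivFin ι).symm) ∘ Tuple.sort (f ∘ (Fintype.equivFin ι).symm)

/-- Nonincreasing rearrangement of a finite real-valued family. -/
noncomputable def sortDown {ι : Type*} [Fintype ι] (f : ι → ℝ) : Fin (Fintype.card ι) → ℝ :=
  fun i => sortUp f i.rev

/-- Ergotropy ξ(ρ,H) = Tr(ρH) − inf over unitaries V of Tr(V ρ V* H). -/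
noncomputable def ergotropy {ι : Type*} [Fintype ι] [DecidableEq ι] (ρ H : Matrix ι ι ℂ) : ℝ :=
  ((ρ * H).trace).re -
    ⨅ V : Matrix.unitaryGroup ι ℂ,
      (((V : Matrix ι ι ℂ) * ρ * star (V : Matrix ι ι ℂ) * H).trace).re

/-- Passive energy E_p(ρ,H) = ∑ λ_i^↓ ε_i^↑. -/
noncomputable def passiveEnergy {ι : Type*} [Fintype ι] [DecidableEq ι]
    {ρ H : Matrix ι ι ℂ} (hρ : ρ.IsHermitian) (hH : H.IsHermitian) : ℝ :=
  ∑ i, sortDown hρ.eigenvalues i * sortUp hH.eigenvalues i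

/-- |u⟩⟨u|, the matrix with entries u_i conj(u_j). -/
noncomputable def ketbra {ι : Type*} (u : ι → ℂ) : Matrix ι ι ℂ := Matrix.vecMulVec u (star u)

/-- Tensor (Kronecker) product of vectors: (u ⊗ v)_(i,j) = u_i v_j. -/
noncomputable def vecTensor {ιa ιb : Type*} (u : ιa → ℂ) (v : ιb → ℂ) : ιa × ιb → ℂ :=
  fun p => u p.1 * v p.2

/-- The local measurement channel Π(ρ) = ∑_k (P_k ⊗ I) ρ (P_k ⊗ I). -/
noncomputable def pinch {ιa ιb K : Type*} [Fintype ιa] [Fintype ιb] [Fintype K]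
    [DecidableEq ιa] [DecidableEq ιb]
    (P : K → Matrix ιa ιa ℂ) (ρ : Matrix (ιa × ιb) (ιa × ιb) ℂ) :
    Matrix (ιa × ιb) (ιa × ιb) ℂ :=
  ∑ k, (P k ⊗ₖ (1 : Matrix ιb ιb ℂ)) * ρ * (P k ⊗ₖ (1 : Matrix ιb ιb ℂ))

/-- Local ergotropy ξ^l(ρ,H) = Tr(ρH) − inf over local unitaries U⊗V of Tr((U⊗V) ρ (U⊗V)* H). -/
noncomputable def localErgotropy {n m : ℕ}
    (ρ H : Matrix (Fin n × Fin m) (Fin n × Fin m) ℂ) : ℝ :=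
  ((ρ * H).trace).re -
    ⨅ W : Matrix.unitaryGroup (Fin n) ℂ × Matrix.unitaryGroup (Fin m) ℂ,
      ((((W.1 : Matrix (Fin n) (Fin n) ℂ) ⊗ₖ (W.2 : Matrix (Fin m) (Fin m) ℂ)) * ρ *
        star ((W.1 : Matrix (Fin n) (Fin n) ℂ) ⊗ₖ (W.2 : Matrix (Fin m) (Fin m) ℂ)) * H).trace).re

/-- First marginal (partial trace over the second factor). -/
noncomputable def marginalA {n m : ℕ} (ρ : Matrix (Fin n × Fin m) (Fin n × Fin m) ℂ) :
    Matrix (Fin n) (Fin n) ℂ :=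
  Matrix.of fun i i' => ∑ j, ρ (i, j) (i', j)

/-- Second marginal (partial trace over the first factor). -/
noncomputable def marginalB {n m : ℕ} (ρ : Matrix (Fin n × Fin m) (Fin n × Fin m) ℂ) :
    Matrix (Fin m) (Fin m) ℂ :=
  Matrix.of fun j j' => ∑ i, ρ (i, j) (i, j')

theorem aux_sortUp {ι : Type*} [Fintype ι] (f : ι → ℝ) :
    ∃ b : Fin (Fintype.card ι) ≃ ι, sortUp f = f ∘ b :=
  ⟨(Tuple.sort (f ∘ (Fintype.equivFin ι).symm)).trans (Fintype.equivFin ι).symm, rfl⟩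

theorem aux_sortDown {ι : Type*} [Fintype ι] (f : ι → ℝ) :
    ∃ b : Fin (Fintype.card ι) ≃ ι, sortDown f = f ∘ b := by
  obtain ⟨b, hb⟩ := aux_sortUp f
  refine ⟨Fin.revPerm.trans b, ?_⟩
  funext i
  simp [sortDown, hb]

theorem aux_mono {ι : Type*} [Fintype ι] (f : ι → ℝ) : Monotone (sortUp f) :=
  Tuple.monotone_sort _

theorem aux_anti {ι : Type*} [Fintype ι] (f : ι → ℝ) : Antitone (sortDown f) := by
  intro i j hij
  exact aux_mono f (Fin.rev_le_rev.mpr hij)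

/-- Rearrangement inequality for a permutation of the index type. -/
theorem aux_perm_le {ι : Type*} [Fintype ι] (d e : ι → ℝ) (σ : Equiv.Perm ι) :
    ∑ i, sortDown d i * sortUp e i ≤ ∑ i, d (σ i) * e i := by
  obtain ⟨a, ha⟩ := aux_sortDown d
  obtain ⟨b, hb⟩ := aux_sortUp e
  have hanti : Antivary (sortDown d) (sortUp e) := (aux_anti d).antivary (aux_mono e)
  have h := hanti.sum_mul_le_sum_comp_perm_mul (σ := (b.trans σ).trans a.symm)
  refine h.trans (le_of_eq ?_)
  rw [← Equiv.sum_comp b]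
  simp [ha, hb]

theorem aux_perm_eq {ι : Type*} [Fintype ι] (d e : ι → ℝ) :
    ∃ σ : Equiv.Perm ι, ∑ i, sortDown d i * sortUp e i = ∑ i, d (σ i) * e i := by
  obtain ⟨a, ha⟩ := aux_sortDown d
  obtain ⟨b, hb⟩ := aux_sortUp e
  refine ⟨b.symm.trans a, ?_⟩
  rw [← Equiv.sum_comp b]
  simp [ha, hb]

/-- Doubly stochastic bound. -/
theorem aux_ds_le {ι : Type*} [Fintype ι] [DecidableEq ι] (d e : ι → ℝ)
    (S : Matrix ι ι ℝ) (hS : S ∈ doublyStochastic ℝ ι) :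
    ∑ i, sortDown d i * sortUp e i ≤ ∑ i, ∑ j, S i j * d j * e i := by
  obtain ⟨w, hw0, hw1, rfl⟩ := exists_eq_sum_perm_of_mem_doublyStochastic hS
  have key : ∑ i, ∑ j, (∑ σ : Equiv.Perm ι, w σ • σ.permMatrix ℝ) i j * d j * e i
      = ∑ σ : Equiv.Perm ι, w σ * ∑ i, d (σ i) * e i := by
    have hp : ∀ i j, (∑ σ : Equiv.Perm ι, w σ • σ.permMatrix ℝ) i j
        = ∑ σ : Equiv.Perm ι, w σ * (if σ i = j then 1 else 0) := by
      intro i j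
      rw [Matrix.sum_apply]
      refine Finset.sum_congr rfl fun σ _ => ?_
      simp [Equiv.Perm.permMatrix, PEquiv.toMatrix_apply, Equiv.toPEquiv_apply, eq_comm]
    simp only [hp, Finset.sum_mul, Finset.mul_sum]
    rw [Finset.sum_comm (s := (Finset.univ : Finset (Equiv.Perm ι)))]
    refine Finset.sum_congr rfl fun i _ => ?_
    rw [Finset.sum_comm]
    refine Finset.sum_congr rfl fun σ _ => ?_
    simp [mul_assoc]
  rw [key]
  calc ∑ i, sortDown d i * sortUp e i
      = ∑ σ : Equiv.Perm ι, w σ * ∑ i, sortDown d i * sortUp e i := by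
        rw [← Finset.sum_mul, hw1, one_mul]
    _ ≤ _ := Finset.sum_le_sum fun σ _ =>
        mul_le_mul_of_nonneg_left (aux_perm_le d e σ) (hw0 σ)

theorem aux_spectral {ι : Type*} [Fintype ι] [DecidableEq ι] {A : Matrix ι ι ℂ}
    (hA : A.IsHermitian) : ∃ U : Matrix ι ι ℂ, U * Uᴴ = 1 ∧ Uᴴ * U = 1 ∧
      A = U * diagonal (fun i => (hA.eigenvalues i : ℂ)) * Uᴴ := by
  refine ⟨hA.eigenvectorUnitary, ?_, ?_, ?_⟩
  · exact Unitary.mul_star_self_of_mem hA.eigenvectorUnitary.2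
  · exact Unitary.star_mul_self_of_mem hA.eigenvectorUnitary.2
  · conv_lhs => rw [hA.spectral_theorem, Unitary.conjStarAlgAut_apply]
    rfl

theorem aux_trace_diag {ι : Type*} [Fintype ι] [DecidableEq ι] (X : Matrix ι ι ℂ)
    (d e : ι → ℝ) :
    ((X * diagonal (fun i => (d i : ℂ)) * Xᴴ * diagonal (fun i => (e i : ℂ))).trace).re
      = ∑ i, ∑ j, Complex.normSq (X i j) * d j * e i := by
  simp only [Matrix.trace, Matrix.diag_apply, Matrix.mul_diagonal, Complex.re_sum]
  refine Finset.sum_congr rfl fun i _ => ?_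
  rw [Matrix.mul_apply, Finset.sum_mul, Complex.re_sum]
  refine Finset.sum_congr rfl fun j _ => ?_
  rw [Matrix.mul_diagonal, Matrix.conjTranspose_apply]
  have : X i j * (d j : ℂ) * star (X i j) * (e i : ℂ)
      = ((Complex.normSq (X i j) * d j * e i : ℝ) : ℂ) := by
    push_cast
    rw [← Complex.mul_conj]
    simp only [Complex.star_def]
    ring
  rw [this, Complex.ofReal_re]

theorem aux_row {ι : Type*} [Fintype ι] (X : Matrix ι ι ℂ) (i : ι) :
    ((∑ j, Complex.normSq (X i j) : ℝ) : ℂ) = (X * Xᴴ) i i := by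
  rw [Matrix.mul_apply]
  push_cast
  refine Finset.sum_congr rfl fun j _ => ?_
  rw [← Complex.mul_conj]; rfl

theorem aux_col {ι : Type*} [Fintype ι] (X : Matrix ι ι ℂ) (j : ι) :
    ((∑ i, Complex.normSq (X i j) : ℝ) : ℂ) = (Xᴴ * X) j j := by
  rw [Matrix.mul_apply]
  push_cast
  refine Finset.sum_congr rfl fun i _ => ?_
  rw [← Complex.mul_conj, mul_comm]; rfl

/-- Trace bound for a unital, trace preserving family of operators. -/
theorem aux_family_le {ι K : Type*} [Fintype ι] [DecidableEq ι] [Fintype K]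
    {ρ H : Matrix ι ι ℂ} (hρ : ρ.IsHermitian) (hH : H.IsHermitian)
    (M : K → Matrix ι ι ℂ) (h1 : ∑ k, M k * (M k)ᴴ = 1) (h2 : ∑ k, (M k)ᴴ * M k = 1) :
    passiveEnergy hρ hH ≤ ∑ k, ((M k * ρ * (M k)ᴴ * H).trace).re := by
  obtain ⟨U, hU1, hU2, hU⟩ := aux_spectral hρ
  obtain ⟨W, hW1, hW2, hW⟩ := aux_spectral hH
  set d := hρ.eigenvalues with hd
  set e := hH.eigenvalues with he
  have hterm : ∀ k, ((M k * ρ * (M k)ᴴ * H).trace).re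
      = ∑ i, ∑ j, Complex.normSq ((Wᴴ * M k * U) i j) * d j * e i := by
    intro k
    rw [← aux_trace_diag]
    congr 1
    conv_lhs => rw [hU, hW]
    simp only [Matrix.conjTranspose_mul, Matrix.conjTranspose_conjTranspose]
    simp only [Matrix.mul_assoc]
    conv_rhs => rw [Matrix.trace_mul_comm]
    conv_lhs => rw [← Matrix.mul_assoc, ← Matrix.mul_assoc, ← Matrix.mul_assoc,
      ← Matrix.mul_assoc, ← Matrix.mul_assoc, ← Matrix.mul_assoc, Matrix.trace_mul_comm]
    conv_rhs => rw [Matrix.trace_mul_comm]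
    simp only [Matrix.mul_assoc]
  have hS : (Matrix.of fun i j => ∑ k, Complex.normSq ((Wᴴ * M k * U) i j))
      ∈ doublyStochastic ℝ ι := by
    rw [mem_doublyStochastic_iff_sum]
    refine ⟨fun i j => Finset.sum_nonneg fun k _ => Complex.normSq_nonneg _, fun i => ?_,
      fun j => ?_⟩
    · apply Complex.ofReal_injective
      simp only [Matrix.of_apply]
      rw [Finset.sum_comm, Complex.ofReal_sum]
      simp only [aux_row]
      have : ∑ k, (Wᴴ * M k * U) * (Wᴴ * M k * U)ᴴ = 1 := by
        calc ∑ k, (Wᴴ * M k * U) * (Wᴴ * M k * U)ᴴ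
            = ∑ k, Wᴴ * (M k * (M k)ᴴ) * W := Finset.sum_congr rfl fun k _ => by
              simp only [Matrix.conjTranspose_mul, Matrix.conjTranspose_conjTranspose,
                Matrix.mul_assoc]
              rw [← Matrix.mul_assoc U, hU1, Matrix.one_mul]
          _ = 1 := by rw [← Finset.sum_mul, ← Finset.mul_sum, h1, Matrix.mul_one, hW2]
      rw [← Matrix.sum_apply, this]; simp
    · apply Complex.ofReal_injective
      simp only [Matrix.of_apply]
      rw [Finset.sum_comm, Complex.ofReal_sum]
      simp only [aux_col]
      have : ∑ k, (Wᴴ * M k * U)ᴴ * (Wᴴ * M k * U) = 1 := by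
        calc ∑ k, (Wᴴ * M k * U)ᴴ * (Wᴴ * M k * U)
            = ∑ k, Uᴴ * ((M k)ᴴ * M k) * U := Finset.sum_congr rfl fun k _ => by
              simp only [Matrix.conjTranspose_mul, Matrix.conjTranspose_conjTranspose,
                Matrix.mul_assoc]
              rw [← Matrix.mul_assoc W, hW1, Matrix.one_mul]
          _ = 1 := by rw [← Finset.sum_mul, ← Finset.mul_sum, h2, Matrix.mul_one, hU2]
      rw [← Matrix.sum_apply, this]; simp
  refine (aux_ds_le d e _ hS).trans (le_of_eq ?_)
  simp only [hterm, Matrix.of_apply, Finset.sum_mul]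
  rw [Finset.sum_comm (s := (Finset.univ : Finset K))]
  exact Finset.sum_congr rfl fun i _ => Finset.sum_comm

theorem aux_unitary_le {ι : Type*} [Fintype ι] [DecidableEq ι]
    {ρ H : Matrix ι ι ℂ} (hρ : ρ.IsHermitian) (hH : H.IsHermitian)
    (V : Matrix.unitaryGroup ι ℂ) :
    passiveEnergy hρ hH ≤
      (((V : Matrix ι ι ℂ) * ρ * star (V : Matrix ι ι ℂ) * H).trace).re := by
  have h := aux_family_le hρ hH (fun _ : Unit => (V : Matrix ι ι ℂ))
    (by rw [Fintype.sum_unique]; exact Unitary.mul_star_self_of_mem V.2)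
    (by rw [Fintype.sum_unique]; exact Unitary.star_mul_self_of_mem V.2)
  rw [Fintype.sum_unique] at h
  exact h

theorem aux_unitary_eq {ι : Type*} [Fintype ι] [DecidableEq ι]
    {ρ H : Matrix ι ι ℂ} (hρ : ρ.IsHermitian) (hH : H.IsHermitian) :
    ∃ V : Matrix.unitaryGroup ι ℂ, passiveEnergy hρ hH =
      (((V : Matrix ι ι ℂ) * ρ * star (V : Matrix ι ι ℂ) * H).trace).re := by
  obtain ⟨U, hU1, hU2, hU⟩ := aux_spectral hρ
  obtain ⟨W, hW1, hW2, hW⟩ := aux_spectral hH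
  obtain ⟨σ, hσ⟩ := aux_perm_eq hρ.eigenvalues hH.eigenvalues
  set d := hρ.eigenvalues with hd
  set e := hH.eigenvalues with he
  set Q : Matrix ι ι ℂ := σ.permMatrix ℂ with hQ
  have hQapp : ∀ i j, Q i j = if σ i = j then 1 else 0 := by
    intro i j
    simp [hQ, Equiv.Perm.permMatrix, PEquiv.toMatrix_apply, Equiv.toPEquiv_apply, eq_comm]
  have hQ1 : Q * Qᴴ = 1 := by
    ext i j
    simp [Matrix.mul_apply, hQapp, Matrix.one_apply, eq_comm]
  have hV : (W * Q * Uᴴ) * (W * Q * Uᴴ)ᴴ = 1 := by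
    simp only [Matrix.conjTranspose_mul, Matrix.conjTranspose_conjTranspose, Matrix.mul_assoc]
    rw [← Matrix.mul_assoc Uᴴ, hU2, Matrix.one_mul, ← Matrix.mul_assoc Q, hQ1, Matrix.one_mul, hW1]
  refine ⟨⟨W * Q * Uᴴ, Matrix.mem_unitaryGroup_iff.mpr hV⟩, ?_⟩
  have h1 : (W * Q * Uᴴ * ρ * star (W * Q * Uᴴ) * H).trace
      = (Q * diagonal (fun i => (d i : ℂ)) * Qᴴ * diagonal (fun i => (e i : ℂ))).trace := by
    have hc : ∀ X : Matrix ι ι ℂ, Uᴴ * (U * X) = X := fun X => by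
      rw [← Matrix.mul_assoc, hU2, Matrix.one_mul]
    have hc' : ∀ X : Matrix ι ι ℂ, Wᴴ * (W * X) = X := fun X => by
      rw [← Matrix.mul_assoc, hW2, Matrix.one_mul]
    conv_lhs => rw [hU, hW]
    simp only [Matrix.star_eq_conjTranspose, Matrix.conjTranspose_mul,
      Matrix.conjTranspose_conjTranspose, Matrix.mul_assoc, hc, hc']
    rw [Matrix.trace_mul_comm]
    simp only [Matrix.mul_assoc, hW2, Matrix.mul_one]
  show _ = ((W * Q * Uᴴ * ρ * star (W * Q * Uᴴ) * H).trace).re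
  rw [h1, aux_trace_diag]
  show ∑ i, sortDown d i * sortUp e i = _
  rw [hσ]
  refine Finset.sum_congr rfl fun i _ => ?_
  rw [Finset.sum_eq_single (σ i)]
  · simp [hQapp]
  · intro j _ hj
    simp [hQapp, hj.symm]
  · simp

theorem aux_iInf {ι : Type*} [Fintype ι] [DecidableEq ι]
    {ρ H : Matrix ι ι ℂ} (hρ : ρ.IsHermitian) (hH : H.IsHermitian) :
    (⨅ V : Matrix.unitaryGroup ι ℂ,
      (((V : Matrix ι ι ℂ) * ρ * star (V : Matrix ι ι ℂ) * H).trace).re)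
      = passiveEnergy hρ hH := by
  obtain ⟨V, hV⟩ := aux_unitary_eq hρ hH
  apply le_antisymm
  · rw [hV]
    refine ciInf_le ⟨passiveEnergy hρ hH, ?_⟩ V
    rintro _ ⟨V', rfl⟩
    exact aux_unitary_le hρ hH V'
  · exact le_ciInf fun V' => aux_unitary_le hρ hH V'

theorem aux_marginal_trace {n m : ℕ} (ρ : Matrix (Fin n × Fin m) (Fin n × Fin m) ℂ)
    (A : Matrix (Fin n) (Fin n) ℂ) :
    (ρ * (A ⊗ₖ (1 : Matrix (Fin m) (Fin m) ℂ))).trace = (marginalA ρ * A).trace := by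
  simp only [Matrix.trace, Matrix.diag_apply, Matrix.mul_apply, Fintype.sum_prod_type,
    Matrix.kroneckerMap_apply, Matrix.one_apply, marginalA, Matrix.of_apply, Finset.sum_mul]
  refine Finset.sum_congr rfl fun i _ => ?_
  rw [Finset.sum_comm]
  refine Finset.sum_congr rfl fun i' _ => ?_
  refine Finset.sum_congr rfl fun j _ => ?_
  simp

theorem aux_pinch_trace {n m : ℕ}
    {A : Matrix (Fin n) (Fin n) ℂ} {B : Matrix (Fin m) (Fin m) ℂ}
    {ρ : Matrix (Fin n × Fin m) (Fin n × Fin m) ℂ}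
    {K : Type*} [Fintype K] (P : K → Matrix (Fin n) (Fin n) ℂ)
    (hPidem : ∀ k, P k * P k = P k)
    (hPsum : ∑ k, P k = (1 : Matrix (Fin n) (Fin n) ℂ))
    (hPinv : ∑ k, P k * marginalA ρ * P k = marginalA ρ) :
    (pinch P ρ * (A ⊗ₖ (1 : Matrix (Fin m) (Fin m) ℂ)
        + (1 : Matrix (Fin n) (Fin n) ℂ) ⊗ₖ B)).trace
      = (ρ * (A ⊗ₖ (1 : Matrix (Fin m) (Fin m) ℂ)
        + (1 : Matrix (Fin n) (Fin n) ℂ) ⊗ₖ B)).trace := by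
  have hcyc : ∀ X, (pinch P ρ * X).trace = ∑ k, (ρ * ((P k ⊗ₖ (1 : Matrix (Fin m) (Fin m) ℂ))
      * X * (P k ⊗ₖ (1 : Matrix (Fin m) (Fin m) ℂ)))).trace := by
    intro X
    rw [pinch, Finset.sum_mul, Matrix.trace_sum]
    refine Finset.sum_congr rfl fun k _ => ?_
    rw [Matrix.mul_assoc, Matrix.mul_assoc, Matrix.trace_mul_comm]
    simp only [Matrix.mul_assoc]
  rw [Matrix.mul_add, Matrix.mul_add, Matrix.trace_add, Matrix.trace_add]
  congr 1
  · rw [hcyc]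
    simp only [← Matrix.mul_kronecker_mul, Matrix.one_mul, aux_marginal_trace]
    conv_rhs => rw [← hPinv]
    rw [Finset.sum_mul, Matrix.trace_sum]
    refine Finset.sum_congr rfl fun k _ => ?_
    rw [← Matrix.mul_assoc, Matrix.trace_mul_comm]
    simp only [Matrix.mul_assoc]
  · rw [hcyc]
    simp only [← Matrix.mul_kronecker_mul, Matrix.one_mul, Matrix.mul_one, hPidem]
    rw [← Matrix.trace_sum, ← Finset.mul_sum]
    congr 2
    ext ⟨i, j⟩ ⟨i', j'⟩
    simp only [Matrix.sum_apply, Matrix.kroneckerMap_apply]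
    rw [← Finset.sum_mul, ← Matrix.sum_apply, hPsum]

/-- Theorem 5 of the paper: for non-interacting Hamiltonians,
EMIN equals the difference of passive energies, and is nonnegative. -/
theorem emin_noninteracting_eq_passiveEnergy_diff {n m : ℕ}
    {A : Matrix (Fin n) (Fin n) ℂ} {B : Matrix (Fin m) (Fin m) ℂ}
    (hA : A.IsHermitian) (hB : B.IsHermitian)
    (H : Matrix (Fin n × Fin m) (Fin n × Fin m) ℂ)
    (hHdef : H = A ⊗ₖ (1 : Matrix (Fin m) (Fin m) ℂ)
        + (1 : Matrix (Fin n) (Fin n) ℂ) ⊗ₖ B)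
    (hH : H.IsHermitian)
    {ρ : Matrix (Fin n × Fin m) (Fin n × Fin m) ℂ}
    (hρ : ρ.PosSemidef) (hρtr : ρ.trace = 1)
    {K : Type*} [Fintype K] (P : K → Matrix (Fin n) (Fin n) ℂ)
    (hPherm : ∀ k, (P k)ᴴ = P k) (hPidem : ∀ k, P k * P k = P k)
    (hPorth : ∀ k l, k ≠ l → P k * P l = 0)
    (hPsum : ∑ k, P k = (1 : Matrix (Fin n) (Fin n) ℂ))
    (hPinv : ∑ k, P k * marginalA ρ * P k = marginalA ρ)
    (hPinch : (pinch P ρ).IsHermitian) :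
    ergotropy ρ H - ergotropy (pinch P ρ) H
      = passiveEnergy hPinch hH - passiveEnergy hρ.isHermitian hH
    ∧ 0 ≤ passiveEnergy hPinch hH - passiveEnergy hρ.isHermitian hH := by
  rw [ergotropy, ergotropy, aux_iInf hρ.isHermitian hH, aux_iInf hPinch hH]
  have ht : (pinch P ρ * H).trace = (ρ * H).trace := by
    rw [hHdef]
    exact aux_pinch_trace P hPidem hPsum hPinv
  refine ⟨by rw [ht]; ring, sub_nonneg.mpr ?_⟩
  obtain ⟨V, hV⟩ := aux_unitary_eq hPinch hH
  have hV1 : (V : Matrix (Fin n × Fin m) (Fin n × Fin m) ℂ) * (V : Matrix _ _ ℂ)ᴴ = 1 :=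
    Unitary.mul_star_self_of_mem V.2
  have hV2 : (V : Matrix (Fin n × Fin m) (Fin n × Fin m) ℂ)ᴴ * (V : Matrix _ _ ℂ) = 1 :=
    Unitary.star_mul_self_of_mem V.2
  have hQh : ∀ k, (P k ⊗ₖ (1 : Matrix (Fin m) (Fin m) ℂ))ᴴ = P k ⊗ₖ 1 := by
    intro k
    rw [Matrix.conjTranspose_kronecker, hPherm, Matrix.conjTranspose_one]
  have hQi : ∀ k, (P k ⊗ₖ (1 : Matrix (Fin m) (Fin m) ℂ)) * (P k ⊗ₖ 1) = P k ⊗ₖ 1 := by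
    intro k
    rw [← Matrix.mul_kronecker_mul, hPidem, Matrix.one_mul]
  have hQs : ∑ k, (P k ⊗ₖ (1 : Matrix (Fin m) (Fin m) ℂ)) = 1 := by
    rw [← Matrix.one_kronecker_one, ← hPsum]
    ext ⟨i, j⟩ ⟨i', j'⟩
    simp only [Matrix.sum_apply, Matrix.kroneckerMap_apply]
    rw [← Finset.sum_mul]
  have h := aux_family_le hρ.isHermitian hH
    (fun k => (V : Matrix (Fin n × Fin m) (Fin n × Fin m) ℂ) * (P k ⊗ₖ 1)) (by
      calc _ = ∑ k, (V : Matrix (Fin n × Fin m) (Fin n × Fin m) ℂ) * (P k ⊗ₖ 1)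
              * (V : Matrix _ _ ℂ)ᴴ := Finset.sum_congr rfl fun k _ => by
            rw [Matrix.conjTranspose_mul, hQh, Matrix.mul_assoc, ← Matrix.mul_assoc (P k ⊗ₖ 1),
              hQi, Matrix.mul_assoc]
        _ = 1 := by rw [← Finset.sum_mul, ← Finset.mul_sum, hQs, Matrix.mul_one, hV1]) (by
      calc _ = ∑ k, (P k ⊗ₖ (1 : Matrix (Fin m) (Fin m) ℂ)) :=
            Finset.sum_congr rfl fun k _ => by
            rw [Matrix.conjTranspose_mul, hQh, Matrix.mul_assoc,
              ← Matrix.mul_assoc (V : Matrix (Fin n × Fin m) (Fin n × Fin m) ℂ)ᴴ, hV2,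
              Matrix.one_mul, hQi]
        _ = 1 := hQs)
  refine h.trans (le_of_eq ?_)
  rw [hV, ← Complex.re_sum, ← Matrix.trace_sum, pinch]
  congr 2
  rw [Finset.mul_sum, Finset.sum_mul, Finset.sum_mul]
  refine Finset.sum_congr rfl fun k _ => ?_
  rw [Matrix.conjTranspose_mul, hQh, Matrix.star_eq_conjTranspose]
  simp only [Matrix.mul_assoc]
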